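/- There is no duality gap between the continuous-time primal LP on measures and the continuous-time dual LP on functions: p* = d*, i.e., sup{ μ₀(X) : (μ₀, μ, μ̂₀) feasible for the primal LP } = inf{ ∫_X w dλ : (v, w) feasible for the dual LP }. -/

import Mathlib

open MeasureTheory

/-- The (topological) support of a Borel measure. -/
def msupport {α : Type*} [TopologicalSpace α] [MeasurableSpace α] (μ : Measure α) : Set α :=
  {x | ∀ s : Set α, IsOpen s → x ∈ s → 0 < μ s}

/-- The continuous-time discounted Liouville equation for the pair `(μ₀, μ)`. -/
def LiouvilleC {n m : ℕ}
    (f : EuclideanSpace ℝ (Fin n) → EuclideanSpace ℝ (Fin m) → EuclideanSpace ℝ (Fin n))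
    (β : ℝ) (μ₀ : Measure (EuclideanSpace ℝ (Fin n)))
    (μ : Measure (EuclideanSpace ℝ (Fin n) × EuclideanSpace ℝ (Fin m))) : Prop :=
  ∀ v : EuclideanSpace ℝ (Fin n) → ℝ, ContDiff ℝ 1 v →
    β * ∫ p, v p.1 ∂μ = ∫ x, v x ∂μ₀ + ∫ p, fderiv ℝ v p.1 (f p.1 p.2) ∂μ

/-- Feasibility of a triple `(μ₀, μ, μ̂₀)` for the continuous-time primal LP. -/
def FeasibleC {n m : ℕ} (X : Set (EuclideanSpace ℝ (Fin n)))
    (U : Set (EuclideanSpace ℝ (Fin m)))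
    (f : EuclideanSpace ℝ (Fin n) → EuclideanSpace ℝ (Fin m) → EuclideanSpace ℝ (Fin n))
    (β : ℝ) (μ₀ : Measure (EuclideanSpace ℝ (Fin n)))
    (μ : Measure (EuclideanSpace ℝ (Fin n) × EuclideanSpace ℝ (Fin m)))
    (μh : Measure (EuclideanSpace ℝ (Fin n))) : Prop :=
  IsFiniteMeasure μ₀ ∧ IsFiniteMeasure μ ∧ IsFiniteMeasure μh ∧
  msupport μ₀ ⊆ X ∧ msupport μh ⊆ X ∧ msupport μ ⊆ X ×ˢ U ∧
  LiouvilleC f β μ₀ μ ∧ μ₀ + μh = volume.restrict X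

/-- Feasibility of a pair `(v, w)` (with `v` continuously differentiable and `w` continuous)
for the continuous-time dual LP. -/
def DualFeasC {n m : ℕ} (X : Set (EuclideanSpace ℝ (Fin n)))
    (U : Set (EuclideanSpace ℝ (Fin m)))
    (f : EuclideanSpace ℝ (Fin n) → EuclideanSpace ℝ (Fin m) → EuclideanSpace ℝ (Fin n))
    (β : ℝ) (v w : EuclideanSpace ℝ (Fin n) → ℝ) : Prop :=
  ContDiff ℝ 1 v ∧ Continuous w ∧
  (∀ x ∈ X, ∀ u ∈ U, fderiv ℝ v x (f x u) ≤ β * v x) ∧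
  (∀ x ∈ X, v x + 1 ≤ w x) ∧
  (∀ x ∈ X, 0 ≤ w x)

/-!
The dual LP minimises a linear functional `J` over the `p` with `b ≤ A p`, for a linear map `A`
into an ordered space of continuous functions on compact sets. Its optimal value is a finite
sublinear function of the right-hand side `b`, finite because the range of `A` is cofinal: large
constants `v` and `w` satisfy any prescribed inequalities. By Hahn-Banach some linear functional
supports the value function at `b`; it is positive, agrees with `J` along `A`, and takes the
optimal value at `b`. By the Riesz-Markov-Kakutani theorem it is integration against three
measures, and the identity `∫ (β v - ∇v · f) dμ + ∫ (w - v) dμ₀ + ∫ w dμ̂₀ = ∫_X w dλ` for all `v`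
and `w` is exactly primal feasibility. The same identity, read for a dual feasible pair, is weak
duality.
-/

section Sublinear

variable {Z : Type*} [AddCommGroup Z] [Module ℝ Z]

theorem exists_linearMap_le_of_sublinear (N : Z → ℝ)
    (N_hom : ∀ c : ℝ, 0 < c → ∀ z, N (c • z) = c * N z) (N_add : ∀ y z, N (y + z) ≤ N y + N z)
    (b : Z) : ∃ g : Z →ₗ[ℝ] ℝ, g b = N b ∧ ∀ z, g z ≤ N z := by
  have N_zero : N 0 = 0 := by grind [N_hom 2 (by norm_num) 0, smul_zero]
  have mul_le (c : ℝ) : c * N b ≤ N (c • b) := by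
    rcases lt_trichotomy c 0 with hc | rfl | hc
    · have h := N_add (c • b) (-c • b)
      rw [N_hom (-c) (neg_pos.mpr hc), ← add_smul, add_neg_cancel, zero_smul, N_zero] at h
      linarith
    · simp [N_zero]
    · exact (N_hom c hc b).ge
  let φ : Z →ₗ.[ℝ] ℝ := .mkSpanSingleton' b (N b) fun c hc ↦ by
    rcases smul_eq_zero.mp hc with rfl | rfl <;> simp [N_zero]
  obtain ⟨g, hgφ, hgN⟩ := exists_extension_of_le_sublinear φ N N_hom N_add <| by
    rintro ⟨z, hz⟩
    obtain ⟨c, rfl⟩ := Submodule.mem_span_singleton.mp hz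
    exact (LinearPMap.mkSpanSingleton'_apply ..).trans_le (mul_le c)
  exact ⟨g, (hgφ ⟨b, Submodule.mem_span_singleton_self b⟩).trans
    (LinearPMap.mkSpanSingleton'_apply_self ..), hgN⟩

end Sublinear

section ConicProgram

variable {P Z : Type*} [AddCommGroup P] [Module ℝ P] [AddCommGroup Z] [Module ℝ Z]
  [Preorder Z] {A : P →ₗ[ℝ] Z} {J : P →ₗ[ℝ] ℝ}

/-- The optimal value of the conic linear program `inf {J p | z ≤ A p}`, as a function of the
right-hand side `z`. -/
noncomputable def conicValue (A : P →ₗ[ℝ] Z) (J : P →ₗ[ℝ] ℝ) (z : Z) : ℝ :=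
  sInf (J '' {p | z ≤ A p})

open scoped Pointwise in
theorem conicValue_smul [PosSMulMono ℝ Z] {c : ℝ} (hc : 0 < c) (z : Z) :
    conicValue A J (c • z) = c * conicValue A J z := by
  have feasible_smul : {p | c • z ≤ A p} = c • {p | z ≤ A p} := by
    ext p
    rw [Set.mem_smul_set_iff_inv_smul_mem₀ hc.ne', Set.mem_ofPred_eq, Set.mem_ofPred_eq, map_smul]
    constructor <;> intro h
    · simpa [inv_smul_smul₀ hc.ne'] using smul_le_smul_of_nonneg_left h (inv_nonneg.mpr hc.le)
    · simpa [smul_inv_smul₀ hc.ne'] using smul_le_smul_of_nonneg_left h hc.le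
  rw [conicValue, feasible_smul, image_smul_set, Real.sInf_smul_of_nonneg hc.le, smul_eq_mul,
    conicValue]

variable [IsOrderedAddMonoid Z]

theorem isGLB_conicValue (hA : ∀ z, ∃ p, z ≤ A p) (hJ : ∀ p, 0 ≤ A p → 0 ≤ J p) (z : Z) :
    IsGLB (J '' {p | z ≤ A p}) (conicValue A J z) := by
  obtain ⟨q, hq⟩ := hA (-z)
  refine isGLB_csInf (Set.Nonempty.image J (hA z)) ⟨-J q, ?_⟩
  rintro _ ⟨p, hp, rfl⟩
  have hpq : 0 ≤ J (p + q) := hJ _ <| by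
    simpa only [map_add, add_neg_cancel] using add_le_add hp hq
  rw [map_add] at hpq
  linarith

theorem conicValue_add_le (hA : ∀ z, ∃ p, z ≤ A p) (hJ : ∀ p, 0 ≤ A p → 0 ≤ J p) (y z : Z) :
    conicValue A J (y + z) ≤ conicValue A J y + conicValue A J z := by
  refine le_of_forall_pos_lt_add fun ε hε ↦ ?_
  obtain ⟨_, ⟨p, hp, rfl⟩, -, hpε⟩ :=
    (isGLB_conicValue hA hJ y).exists_between (lt_add_of_pos_right _ (half_pos hε))
  obtain ⟨_, ⟨q, hq, rfl⟩, -, hqε⟩ :=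
    (isGLB_conicValue hA hJ z).exists_between (lt_add_of_pos_right _ (half_pos hε))
  have hpq : conicValue A J (y + z) ≤ J (p + q) :=
    (isGLB_conicValue hA hJ _).1 ⟨p + q, (add_le_add hp hq).trans_eq (map_add A p q).symm, rfl⟩
  rw [map_add] at hpq
  linarith

theorem exists_nonneg_multiplier_isGLB [PosSMulMono ℝ Z] (hA : ∀ z, ∃ p, z ≤ A p)
    (hJ : ∀ p, 0 ≤ A p → 0 ≤ J p) (b : Z) :
    ∃ g : Z →ₗ[ℝ] ℝ, (∀ z, 0 ≤ z → 0 ≤ g z) ∧ (∀ p, g (A p) = J p) ∧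
      IsGLB (J '' {p | b ≤ A p}) (g b) := by
  obtain ⟨g, hgb, hg⟩ := exists_linearMap_le_of_sublinear (conicValue A J)
    (fun _ ↦ conicValue_smul) (conicValue_add_le hA hJ) b
  have le_of_le {z : Z} {p : P} (h : z ≤ A p) : g z ≤ J p :=
    (hg z).trans ((isGLB_conicValue hA hJ z).1 ⟨p, h, rfl⟩)
  refine ⟨g, fun z hz ↦ ?_, fun p ↦ (le_of_le le_rfl).antisymm ?_,
    hgb ▸ isGLB_conicValue hA hJ b⟩
  · have h : g (-z) ≤ J 0 := le_of_le (by simpa using hz)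
    simpa using h
  · have h : g (A (-p)) ≤ J (-p) := le_of_le le_rfl
    simpa using h

end ConicProgram

section FiniteMeasure

variable {α : Type*} [TopologicalSpace α] [MeasurableSpace α]

theorem msupport_eq_support (μ : Measure α) : msupport μ = μ.support := by
  ext x
  simp only [msupport, Set.mem_ofPred_eq, (nhds_basis_opens x).mem_measureSupport, and_imp]
  exact forall_congr' fun _ ↦ forall_comm

theorem msupport_subset_iff [HereditarilyLindelofSpace α] {μ : Measure α} {S : Set α}
    (hS : IsClosed S) : msupport μ ⊆ S ↔ ∀ᵐ x ∂μ, x ∈ S := by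
  rw [msupport_eq_support]
  exact ⟨Filter.mem_of_superset Measure.support_mem_ae, Measure.support_subset_of_isClosed hS⟩

variable [T2Space α] [BorelSpace α] {S : Set α} {g : α → ℝ}

theorem integrable_of_continuousOn_of_ae_mem {μ : Measure α} [IsFiniteMeasureOnCompacts μ]
    (hS : IsCompact S) (hμ : ∀ᵐ x ∂μ, x ∈ S) (hg : ContinuousOn g S) : Integrable g μ := by
  rw [← Measure.restrict_eq_self_of_ae_mem hμ]
  exact hg.integrableOn_compact hS

theorem exists_measure_integral_eq_of_nonneg (hS : IsCompact S) (Λ : C(S, ℝ) →ₗ[ℝ] ℝ)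
    (hΛ : ∀ g, 0 ≤ g → 0 ≤ Λ g) :
    ∃ μ : Measure α, IsFiniteMeasure μ ∧ (∀ᵐ x ∂μ, x ∈ S) ∧
      ∀ (g : α → ℝ) (hg : ContinuousOn g S),
        ∫ x, g x ∂μ = Λ ⟨S.domRestrict g, hg.domRestrict⟩ := by
  have : CompactSpace S := isCompact_iff_compactSpace.mp hS
  let T : CompactlySupportedContinuousMap S ℝ →ₚ[ℝ] ℝ := .mk₀
    { toFun := fun g ↦ Λ g.toContinuousMap
      map_add' := fun g h ↦ map_add Λ g.toContinuousMap h.toContinuousMap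
      map_smul' := fun c g ↦ map_smul Λ c g.toContinuousMap }
    fun g hg ↦ hΛ _ hg
  have val_embedding := MeasurableEmbedding.subtype_coe hS.measurableSet
  refine ⟨(RealRMK.rieszMeasure T).map (Subtype.val : S → α), inferInstance, ?_, fun g hg ↦ ?_⟩
  · exact val_embedding.ae_map_iff.mpr (ae_of_all _ Subtype.property)
  · rw [val_embedding.integral_map]
    exact RealRMK.integral_rieszMeasure T
      ⟨⟨S.domRestrict g, hg.domRestrict⟩, HasCompactSupport.of_compactSpace _⟩

end FiniteMeasure

section DiscountedControl

variable {E F : Type*} [NormedAddCommGroup E] [NormedSpace ℝ E]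
  {X : Set E} {U : Set F} {f : E → F → E} {β : ℝ} {v w : E → ℝ}

/-- The discounted generator `v ↦ β v - ∇v · f` of the controlled system `x' = f x u`. -/
noncomputable def discountedGenerator (f : E → F → E) (β : ℝ) (v : E → ℝ) (p : E × F) : ℝ :=
  β * v p.1 - fderiv ℝ v p.1 (f p.1 p.2)

theorem discountedGenerator_add (hv : Differentiable ℝ v) (hw : Differentiable ℝ w) :
    discountedGenerator f β (v + w) = discountedGenerator f β v + discountedGenerator f β w := by
  ext p
  simp only [discountedGenerator, fderiv_add (hv p.1) (hw p.1), Pi.add_apply, FunLike.coe_add]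
  ring

theorem discountedGenerator_const_smul (hv : Differentiable ℝ v) (c : ℝ) :
    discountedGenerator f β (c • v) = c • discountedGenerator f β v := by
  ext p
  simp only [discountedGenerator, fderiv_const_smul (hv p.1), Pi.smul_apply, FunLike.coe_smul,
    smul_eq_mul]
  ring

theorem discountedGenerator_const (c : ℝ) :
    discountedGenerator f β (fun _ ↦ c) = fun _ ↦ β * c := by
  ext p
  simp [discountedGenerator]

/-- Feasibility of `(v, w)` for the dual LP of the discounted control system `x' = f x u` with
state constraint `X` and input constraint `U`. -/
structure IsDualFeasible (X : Set E) (U : Set F) (f : E → F → E) (β : ℝ) (v w : E → ℝ) : Prop where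
  contDiff : ContDiff ℝ 1 v
  continuous : Continuous w
  fderiv_le : ∀ x ∈ X, ∀ u ∈ U, fderiv ℝ v x (f x u) ≤ β * v x
  add_one_le : ∀ x ∈ X, v x + 1 ≤ w x
  nonneg : ∀ x ∈ X, 0 ≤ w x

/-- The `n` times continuously differentiable real functions, as a vector space. -/
def contDiffSubmodule (E : Type*) [NormedAddCommGroup E] [NormedSpace ℝ E] (n : WithTop ℕ∞) :
    Submodule ℝ (E → ℝ) where
  carrier := {v | ContDiff ℝ n v}
  add_mem' := ContDiff.add
  zero_mem' := contDiff_const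
  smul_mem' c _ hv := hv.const_smul c

theorem mem_contDiffSubmodule {n : WithTop ℕ∞} : v ∈ contDiffSubmodule E n ↔ ContDiff ℝ n v :=
  Iff.rfl

theorem contDiffSubmodule.contDiff {n : WithTop ℕ∞} (v : contDiffSubmodule E n) :
    ContDiff ℝ n (v : E → ℝ) :=
  v.2

variable [TopologicalSpace F]

theorem continuousOn_fderiv_apply (hf : ContinuousOn (Function.uncurry f) (X ×ˢ U))
    (hv : ContDiff ℝ 1 v) : ContinuousOn (fun p : E × F ↦ fderiv ℝ v p.1 (f p.1 p.2)) (X ×ˢ U) :=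
  ((hv.continuous_fderiv one_ne_zero).comp continuous_fst).continuousOn.clm_apply hf

theorem continuousOn_discountedGenerator (hf : ContinuousOn (Function.uncurry f) (X ×ˢ U))
    (hv : ContDiff ℝ 1 v) : ContinuousOn (discountedGenerator f β v) (X ×ˢ U) :=
  (continuousOn_const.mul (hv.continuous.comp continuous_fst).continuousOn).sub
    (continuousOn_fderiv_apply hf hv)

/-- The constraint map `(v, w) ↦ (β v - ∇v · f, w - v, w)`: the dual LP asks that its value be at
least `(0, 1, 0)`. -/
noncomputable def dualConstraint (hf : ContinuousOn (Function.uncurry f) (X ×ˢ U)) (β : ℝ) :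
    contDiffSubmodule E 1 × C(E, ℝ) →ₗ[ℝ] C((X ×ˢ U : Set (E × F)), ℝ) × C(X, ℝ) × C(X, ℝ) where
  toFun p :=
    (⟨(X ×ˢ U).domRestrict (discountedGenerator f β p.1),
        (continuousOn_discountedGenerator hf <| contDiffSubmodule.contDiff p.1).domRestrict⟩,
      .restrict X (p.2 - ⟨p.1, (contDiffSubmodule.contDiff p.1).continuous⟩), p.2.restrict X)
  map_add' p q := by
    have := discountedGenerator_add (f := f) (β := β)
      ((contDiffSubmodule.contDiff p.1).differentiable one_ne_zero)
      ((contDiffSubmodule.contDiff q.1).differentiable one_ne_zero)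
    ext x
    · simp [this]
    · simp [add_sub_add_comm]
    · simp
  map_smul' c p := by
    have := discountedGenerator_const_smul (f := f) (β := β)
      ((contDiffSubmodule.contDiff p.1).differentiable one_ne_zero) c
    ext x
    · simp [this]
    · simp [mul_sub]
    · simp

theorem le_dualConstraint_iff (hf : ContinuousOn (Function.uncurry f) (X ×ˢ U))
    {a : C((X ×ˢ U : Set (E × F)), ℝ)} {b c : C(X, ℝ)} {p : contDiffSubmodule E 1 × C(E, ℝ)} :
    (a, b, c) ≤ dualConstraint hf β p ↔
      (∀ z : (X ×ˢ U : Set (E × F)), a z ≤ discountedGenerator f β p.1 z) ∧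
        (∀ x : X, b x ≤ p.2 x - p.1.1 x) ∧ ∀ x : X, c x ≤ p.2 x :=
  Iff.rfl

theorem isDualFeasible_iff_le_dualConstraint (hf : ContinuousOn (Function.uncurry f) (X ×ˢ U))
    (p : contDiffSubmodule E 1 × C(E, ℝ)) :
    IsDualFeasible X U f β p.1 p.2 ↔ (0, 1, 0) ≤ dualConstraint hf β p := by
  rw [le_dualConstraint_iff]
  constructor
  · rintro ⟨-, -, fderiv_le, add_one_le, nonneg⟩
    exact ⟨fun z ↦ sub_nonneg.mpr (fderiv_le _ z.2.1 _ z.2.2),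
      fun x ↦ le_sub_iff_add_le'.mpr (add_one_le x x.2), fun x ↦ nonneg x x.2⟩
  · rintro ⟨generator_nonneg, one_le, nonneg⟩
    exact ⟨contDiffSubmodule.contDiff p.1, p.2.continuous,
      fun x hx u hu ↦ sub_nonneg.mp (generator_nonneg ⟨(x, u), hx, hu⟩),
      fun x hx ↦ le_sub_iff_add_le'.mp (one_le ⟨x, hx⟩), fun x hx ↦ nonneg ⟨x, hx⟩⟩

theorem exists_le_dualConstraint (hX : IsCompact X)
    (hU : IsCompact U) (hf : ContinuousOn (Function.uncurry f) (X ×ˢ U)) (hβ : β ≠ 0)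
    (z : C((X ×ˢ U : Set (E × F)), ℝ) × C(X, ℝ) × C(X, ℝ)) :
    ∃ p, z ≤ dualConstraint hf β p := by
  have : CompactSpace X := isCompact_iff_compactSpace.mp hX
  have : CompactSpace (X ×ˢ U : Set (E × F)) := isCompact_iff_compactSpace.mp (hX.prod hU)
  obtain ⟨a, b, c⟩ := z
  refine ⟨(⟨fun _ ↦ ‖a‖ / β, mem_contDiffSubmodule.mpr contDiff_const⟩,
      .const E (‖b‖ + ‖c‖ + |‖a‖ / β|)),
    (le_dualConstraint_iff hf).mpr ⟨fun z ↦ ?_, fun x ↦ ?_, fun x ↦ ?_⟩⟩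
  · simpa [discountedGenerator_const, mul_div_cancel₀ _ hβ] using a.apply_le_norm z
  · simp only [ContinuousMap.const_apply]
    linarith [b.apply_le_norm x, norm_nonneg c, le_abs_self (‖a‖ / β)]
  · simp only [ContinuousMap.const_apply]
    linarith [c.apply_le_norm x, norm_nonneg b, abs_nonneg (‖a‖ / β)]

variable [MeasurableSpace E] [BorelSpace E] {ν : Measure E}

/-- The objective `(v, w) ↦ ∫_X w dν` of the dual LP. -/
noncomputable def dualObjective (hX : IsCompact X) (ν : Measure E) [IsFiniteMeasureOnCompacts ν] :
    contDiffSubmodule E 1 × C(E, ℝ) →ₗ[ℝ] ℝ where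
  toFun p := ∫ x in X, p.2 x ∂ν
  map_add' p q := integral_add (p.2.continuous.continuousOn.integrableOn_compact hX)
    (q.2.continuous.continuousOn.integrableOn_compact hX)
  map_smul' c p := integral_const_mul c p.2

theorem dualObjective_image [IsFiniteMeasureOnCompacts ν] (hX : IsCompact X)
    (hf : ContinuousOn (Function.uncurry f) (X ×ˢ U)) :
    dualObjective hX ν '' {p | (0, 1, 0) ≤ dualConstraint hf β p} =
      {r | ∃ v w, IsDualFeasible X U f β v w ∧ r = ∫ x in X, w x ∂ν} := by
  ext r
  constructor
  · rintro ⟨p, hp, rfl⟩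
    exact ⟨p.1, p.2, (isDualFeasible_iff_le_dualConstraint hf p).mpr hp, rfl⟩
  · rintro ⟨v, w, h, rfl⟩
    exact ⟨(⟨v, mem_contDiffSubmodule.mpr h.contDiff⟩, ⟨w, h.continuous⟩),
      (isDualFeasible_iff_le_dualConstraint hf _).mp h, rfl⟩

theorem dualObjective_nonneg [IsFiniteMeasureOnCompacts ν] (hX : IsCompact X)
    (hf : ContinuousOn (Function.uncurry f) (X ×ˢ U)) {p : contDiffSubmodule E 1 × C(E, ℝ)}
    (hp : 0 ≤ dualConstraint hf β p) : 0 ≤ dualObjective hX ν p :=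
  setIntegral_nonneg hX.measurableSet fun x hx ↦ ((le_dualConstraint_iff hf).mp hp).2.2 ⟨x, hx⟩

variable [MeasurableSpace F] {μ₀ μh : Measure E} {μ : Measure (E × F)}

/-- Feasibility of `(μ₀, μ, μ̂₀)` for the primal LP of the discounted control system `x' = f x u`,
with the reference measure `ν` in place of the Lebesgue measure. The support conditions are encoded
as almost everywhere membership. -/
structure IsPrimalFeasible (X : Set E) (U : Set F) (f : E → F → E) (β : ℝ) (ν μ₀ : Measure E)
    (μ : Measure (E × F)) (μh : Measure E) : Prop where
  isFiniteMeasure_initial : IsFiniteMeasure μ₀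
  isFiniteMeasure_occupation : IsFiniteMeasure μ
  isFiniteMeasure_slack : IsFiniteMeasure μh
  initial_mem : ∀ᵐ x ∂μ₀, x ∈ X
  occupation_mem : ∀ᵐ p ∂μ, p ∈ X ×ˢ U
  slack_mem : ∀ᵐ x ∂μh, x ∈ X
  liouville : ∀ v : E → ℝ, ContDiff ℝ 1 v →
    β * ∫ p, v p.1 ∂μ = ∫ x, v x ∂μ₀ + ∫ p, fderiv ℝ v p.1 (f p.1 p.2) ∂μ
  add_eq : μ₀ + μh = ν.restrict X

variable [T2Space F] [BorelSpace F] [SecondCountableTopologyEither E F]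

theorem integral_discountedGenerator (hX : IsCompact X) (hU : IsCompact U)
    (hf : ContinuousOn (Function.uncurry f) (X ×ˢ U)) [IsFiniteMeasure μ]
    (hμ : ∀ᵐ p ∂μ, p ∈ X ×ˢ U) (hv : ContDiff ℝ 1 v) :
    ∫ p, discountedGenerator f β v p ∂μ =
      β * ∫ p, v p.1 ∂μ - ∫ p, fderiv ℝ v p.1 (f p.1 p.2) ∂μ := by
  have integrable_v : Integrable (fun p : E × F ↦ v p.1) μ :=
    integrable_of_continuousOn_of_ae_mem (hX.prod hU) hμ
      (hv.continuous.comp continuous_fst).continuousOn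
  have integrable_fderiv : Integrable (fun p : E × F ↦ fderiv ℝ v p.1 (f p.1 p.2)) μ :=
    integrable_of_continuousOn_of_ae_mem (hX.prod hU) hμ (continuousOn_fderiv_apply hf hv)
  simp only [discountedGenerator]
  rw [integral_sub (integrable_v.const_mul β) integrable_fderiv, integral_const_mul]

theorem IsPrimalFeasible.lagrangian_eq (h : IsPrimalFeasible X U f β ν μ₀ μ μh)
    (hX : IsCompact X) (hU : IsCompact U) (hf : ContinuousOn (Function.uncurry f) (X ×ˢ U))
    (hv : ContDiff ℝ 1 v) (hw : Continuous w) :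
    ∫ p, discountedGenerator f β v p ∂μ + ∫ x, (w x - v x) ∂μ₀ + ∫ x, w x ∂μh =
      ∫ x in X, w x ∂ν := by
  have := h.isFiniteMeasure_initial
  have := h.isFiniteMeasure_occupation
  have := h.isFiniteMeasure_slack
  have integrable_initial {g : E → ℝ} (hg : Continuous g) : Integrable g μ₀ :=
    integrable_of_continuousOn_of_ae_mem hX h.initial_mem hg.continuousOn
  have integrable_slack : Integrable w μh :=
    integrable_of_continuousOn_of_ae_mem hX h.slack_mem hw.continuousOn
  rw [integral_discountedGenerator hX hU hf h.occupation_mem hv, h.liouville v hv,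
    integral_sub (integrable_initial hw) (integrable_initial hv.continuous), ← h.add_eq,
    integral_add_measure (integrable_initial hw) integrable_slack]
  ring

theorem isPrimalFeasible_of_lagrangian_eq (hX : IsCompact X) (hU : IsCompact U)
    (hf : ContinuousOn (Function.uncurry f) (X ×ˢ U)) [IsFiniteMeasureOnCompacts ν]
    [IsFiniteMeasure μ₀] [IsFiniteMeasure μ] [IsFiniteMeasure μh] (hμ₀ : ∀ᵐ x ∂μ₀, x ∈ X)
    (hμ : ∀ᵐ p ∂μ, p ∈ X ×ˢ U) (hμh : ∀ᵐ x ∂μh, x ∈ X)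
    (h : ∀ v w : E → ℝ, ContDiff ℝ 1 v → Continuous w →
      ∫ p, discountedGenerator f β v p ∂μ + ∫ x, (w x - v x) ∂μ₀ + ∫ x, w x ∂μh =
        ∫ x in X, w x ∂ν) :
    IsPrimalFeasible X U f β ν μ₀ μ μh where
  isFiniteMeasure_initial := inferInstance
  isFiniteMeasure_occupation := inferInstance
  isFiniteMeasure_slack := inferInstance
  initial_mem := hμ₀
  occupation_mem := hμ
  slack_mem := hμh
  liouville v hv := by
    have hv₀ := h v (fun _ ↦ 0) hv continuous_const
    rw [integral_discountedGenerator hX hU hf hμ hv] at hv₀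
    simp only [zero_sub, integral_neg, integral_zero] at hv₀
    linarith
  add_eq := by
    have : IsFiniteMeasure (ν.restrict X) := isFiniteMeasure_restrict.mpr hX.measure_ne_top
    refine ext_of_forall_integral_eq_of_IsFiniteMeasure fun w ↦ ?_
    have h₀w := h (fun _ ↦ 0) w contDiff_const w.continuous
    rw [integral_add_measure (w.integrable _) (w.integrable _)]
    simpa [discountedGenerator_const] using h₀w

theorem IsPrimalFeasible.measureReal_le_setIntegral (h : IsPrimalFeasible X U f β ν μ₀ μ μh)
    (hX : IsCompact X) (hU : IsCompact U) (hf : ContinuousOn (Function.uncurry f) (X ×ˢ U))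
    (hvw : IsDualFeasible X U f β v w) : μ₀.real X ≤ ∫ x in X, w x ∂ν := by
  have := h.isFiniteMeasure_initial
  have generator_nonneg : 0 ≤ ∫ p, discountedGenerator f β v p ∂μ :=
    integral_nonneg_of_ae <| h.occupation_mem.mono fun p hp ↦
      sub_nonneg.mpr (hvw.fderiv_le _ hp.1 _ hp.2)
  have slack_nonneg : 0 ≤ ∫ x, w x ∂μh :=
    integral_nonneg_of_ae (h.slack_mem.mono hvw.nonneg)
  have mass_le : μ₀.real X ≤ ∫ x, (w x - v x) ∂μ₀ := by
    calc μ₀.real X ≤ μ₀.real Set.univ := measureReal_mono (Set.subset_univ X)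
      _ = ∫ _, (1 : ℝ) ∂μ₀ := by simp
      _ ≤ ∫ x, (w x - v x) ∂μ₀ := by
        refine integral_mono_ae (integrable_const 1) ?_
          (h.initial_mem.mono fun x hx ↦ le_sub_iff_add_le'.mpr (hvw.add_one_le x hx))
        exact integrable_of_continuousOn_of_ae_mem hX h.initial_mem
          (hvw.continuous.sub hvw.contDiff.continuous).continuousOn
  linarith [h.lagrangian_eq hX hU hf hvw.contDiff hvw.continuous]

theorem exists_isPrimalFeasible_measureReal_eq [IsFiniteMeasureOnCompacts ν]
    (hX : IsCompact X) (hU : IsCompact U)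
    (hf : ContinuousOn (Function.uncurry f) (X ×ˢ U))
    (Λ : C((X ×ˢ U : Set (E × F)), ℝ) × C(X, ℝ) × C(X, ℝ) →ₗ[ℝ] ℝ) (hΛ : ∀ z, 0 ≤ z → 0 ≤ Λ z)
    (hΛJ : ∀ p, Λ (dualConstraint hf β p) = dualObjective hX ν p) :
    ∃ μ₀ μ μh, IsPrimalFeasible X U f β ν μ₀ μ μh ∧ μ₀.real X = Λ (0, 1, 0) := by
  obtain ⟨μ, _, hμ, integral_μ⟩ := exists_measure_integral_eq_of_nonneg (hX.prod hU)
    (Λ ∘ₗ .inl ℝ _ _) fun g hg ↦ hΛ _ ⟨hg, le_rfl⟩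
  obtain ⟨μ₀, _, hμ₀, integral_μ₀⟩ := exists_measure_integral_eq_of_nonneg hX
    (Λ ∘ₗ .inr ℝ _ _ ∘ₗ .inl ℝ _ _) fun g hg ↦ hΛ _ ⟨le_rfl, hg, le_rfl⟩
  obtain ⟨μh, _, hμh, integral_μh⟩ := exists_measure_integral_eq_of_nonneg hX
    (Λ ∘ₗ .inr ℝ _ _ ∘ₗ .inr ℝ _ _) fun g hg ↦ hΛ _ ⟨le_rfl, le_rfl, hg⟩
  have split (a b c) : (Λ ∘ₗ .inl ℝ _ _) a + (Λ ∘ₗ .inr ℝ _ _ ∘ₗ .inl ℝ _ _) b +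
      (Λ ∘ₗ .inr ℝ _ _ ∘ₗ .inr ℝ _ _) c = Λ (a, b, c) := by
    simp [← map_add]
  refine ⟨μ₀, μ, μh,
    isPrimalFeasible_of_lagrangian_eq hX hU hf hμ₀ hμ hμh fun v w hv hw ↦ ?_, ?_⟩
  · rw [integral_μ _ (continuousOn_discountedGenerator hf hv),
      integral_μ₀ (fun x ↦ w x - v x) (hw.sub hv.continuous).continuousOn,
      integral_μh w hw.continuousOn, split]
    exact hΛJ (⟨v, mem_contDiffSubmodule.mpr hv⟩, ⟨w, hw⟩)
  · have mass_eq : ∫ _, (1 : ℝ) ∂μ₀ = Λ (0, 1, 0) := integral_μ₀ (fun _ ↦ 1) continuousOn_const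
    rw [← mass_eq, integral_const, smul_eq_mul, mul_one]
    exact measureReal_congr (Filter.eventuallyEq_univ.mpr hμ₀)

theorem continuous_no_duality_gap_general [IsFiniteMeasureOnCompacts ν] (hX : IsCompact X)
    (hU : IsCompact U) (hf : ContinuousOn (Function.uncurry f) (X ×ˢ U)) (hβ : β ≠ 0) :
    ∃ d, IsGreatest {r | ∃ μ₀ μ μh, IsPrimalFeasible X U f β ν μ₀ μ μh ∧ r = μ₀.real X} d ∧
      IsGLB {r | ∃ v w, IsDualFeasible X U f β v w ∧ r = ∫ x in X, w x ∂ν} d := by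
  obtain ⟨Λ, hΛ, hΛJ, hd⟩ := exists_nonneg_multiplier_isGLB
    (exists_le_dualConstraint hX hU hf hβ) (fun _ ↦ dualObjective_nonneg (ν := ν) hX hf) (0, 1, 0)
  rw [dualObjective_image] at hd
  obtain ⟨μ₀, μ, μh, h, hμ₀⟩ := exists_isPrimalFeasible_measureReal_eq hX hU hf Λ hΛ hΛJ
  refine ⟨Λ (0, 1, 0), ⟨⟨μ₀, μ, μh, h, hμ₀.symm⟩, ?_⟩, hd⟩
  rintro _ ⟨μ₀', μ', μh', h', rfl⟩
  refine hd.2 ?_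
  rintro _ ⟨v, w, hvw, rfl⟩
  exact h'.measureReal_le_setIntegral hX hU hf hvw

end DiscountedControl

section Euclidean

variable {n m : ℕ} {X : Set (EuclideanSpace ℝ (Fin n))} {U : Set (EuclideanSpace ℝ (Fin m))}
  {f : EuclideanSpace ℝ (Fin n) → EuclideanSpace ℝ (Fin m) → EuclideanSpace ℝ (Fin n)} {β : ℝ}

theorem feasibleC_iff_isPrimalFeasible (hX : IsClosed X) (hU : IsClosed U)
    {μ₀ μh : Measure (EuclideanSpace ℝ (Fin n))}
    {μ : Measure (EuclideanSpace ℝ (Fin n) × EuclideanSpace ℝ (Fin m))} :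
    FeasibleC X U f β μ₀ μ μh ↔ IsPrimalFeasible X U f β volume μ₀ μ μh := by
  rw [FeasibleC, msupport_subset_iff hX, msupport_subset_iff hX, msupport_subset_iff (hX.prod hU)]
  exact ⟨fun ⟨h₀, h, hh, hX₀, hXh, hXU, hL, hadd⟩ ↦ ⟨h₀, h, hh, hX₀, hXU, hXh, hL, hadd⟩,
    fun ⟨h₀, h, hh, hX₀, hXU, hXh, hL, hadd⟩ ↦ ⟨h₀, h, hh, hX₀, hXh, hXU, hL, hadd⟩⟩

theorem dualFeasC_iff_isDualFeasible {v w : EuclideanSpace ℝ (Fin n) → ℝ} :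
    DualFeasC X U f β v w ↔ IsDualFeasible X U f β v w :=
  ⟨fun ⟨hv, hw, hgen, hvw, hw₀⟩ ↦ ⟨hv, hw, hgen, hvw, hw₀⟩,
    fun ⟨hv, hw, hgen, hvw, hw₀⟩ ↦ ⟨hv, hw, hgen, hvw, hw₀⟩⟩

end Euclidean

theorem continuous_no_duality_gap {n m : ℕ}
    (X : Set (EuclideanSpace ℝ (Fin n))) (U : Set (EuclideanSpace ℝ (Fin m)))
    (hX : IsCompact X) (hU : IsCompact U)
    (f : EuclideanSpace ℝ (Fin n) → EuclideanSpace ℝ (Fin m) → EuclideanSpace ℝ (Fin n))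
    (hf : Continuous fun p : EuclideanSpace ℝ (Fin n) × EuclideanSpace ℝ (Fin m) => f p.1 p.2)
    (β : ℝ) (hβ : 0 < β) :
    sSup {r : ℝ | ∃ μ₀ μ μh, FeasibleC X U f β μ₀ μ μh ∧ r = (μ₀ X).toReal}
      = sInf {r : ℝ | ∃ v w, DualFeasC X U f β v w ∧ r = ∫ x in X, w x ∂volume} := by
  obtain ⟨_, hp, hd⟩ := continuous_no_duality_gap_general (ν := volume) hX hU hf.continuousOn hβ.ne'
  simpa only [feasibleC_iff_isPrimalFeasible hX.isClosed hU.isClosed, dualFeasC_iff_isDualFeasible,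
    measureReal_def] using hp.csSup_eq.trans (hd.csInf_eq hd.nonempty).symm
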